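/- Let n ≥ 1 be an integer, let A = ℝ[s,t]/(s² + t² − 1), and let σ be the ℝ-algebra automorphism of A induced by the rotation ρ_{2π/n} (i.e. σ(s) = s·cos(2π/n) + t·sin(2π/n) and σ(t) = −s·sin(2π/n) + t·cos(2π/n), which is well-defined since s² + t² is rotation-invariant). Then the subalgebra {a ∈ A : σ(a) = a} of σ-invariant elements equals the ℝ-subalgebra of A generated by the images of x_n and y_n. -/

import Mathlib

/-!
In `ℂ ⊗ A` the element `u = s - i t` is a unit with inverse `s + i t`, because `s² + t² = 1`, and
the integral powers of `u` span. The rotation by `θ` multiplies `u` by `exp (iθ)`, so the `u ^ k`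
are eigenvectors and the invariants are spanned by those with `exp (ikθ) = 1`, that is, with
`n ∣ k`. They thus form the algebra generated by `(s ± i t) ^ n = x_n ± i y_n`, or equally by `x_n`
and `y_n`. Since `ℂ` is faithfully flat over `ℝ`, this equality descends from `ℂ ⊗ A` to `A`.
-/

open Real MvPolynomial

/-- `x_n` as a polynomial in `ℝ[s,t]` (variable `0` is `s`, variable `1` is `t`). -/
noncomputable def XnPoly (n : ℕ) : MvPolynomial (Fin 2) ℝ :=
  ∑ j ∈ Finset.range (n / 2 + 1),
    C ((-1 : ℝ) ^ j * (n.choose (2 * j) : ℝ)) * X 1 ^ (2 * j) * X 0 ^ (n - 2 * j)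

/-- `y_n` as a polynomial in `ℝ[s,t]`. -/
noncomputable def YnPoly (n : ℕ) : MvPolynomial (Fin 2) ℝ :=
  ∑ j ∈ Finset.range ((n + 1) / 2),
    C ((-1 : ℝ) ^ j * (n.choose (2 * j + 1) : ℝ)) * X 1 ^ (2 * j + 1) * X 0 ^ (n - 2 * j - 1)

/-- The ideal `(s² + t² − 1)` of `ℝ[s,t]`. -/
noncomputable def circleIdeal : Ideal (MvPolynomial (Fin 2) ℝ) :=
  Ideal.span {X 0 ^ 2 + X 1 ^ 2 - 1}

/-- The circle coordinate ring `A = ℝ[s,t]/(s² + t² − 1)`. -/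
abbrev CircleRing : Type := MvPolynomial (Fin 2) ℝ ⧸ circleIdeal

open scoped TensorProduct

lemma eigenspace_eq_span_of_span_eigenvectors_eq_top {K M ι : Type*} [CommRing K] [IsDomain K]
    [AddCommGroup M] [Module K M] [Module.IsTorsionFree K M] {f : Module.End K M} {v : ι → M}
    {μ : ι → K} (hv : ∀ i, f (v i) = μ i • v i) (hspan : Submodule.span K (Set.range v) = ⊤)
    (c : K) :
    f.eigenspace c = Submodule.span K (v '' {i | μ i = c}) := by
  set P := Submodule.span K (v '' {i | μ i = c})
  set Q := Submodule.span K (v '' {i | μ i ≠ c})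
  have hP : P ≤ f.eigenspace c := by
    rw [Submodule.span_le]
    rintro _ ⟨i, rfl, rfl⟩
    exact Module.End.mem_eigenspace_iff.2 (hv i)
  have hQ : Q ≤ ⨆ d, ⨆ _ : d ≠ c, f.eigenspace d := by
    rw [Submodule.span_le]
    rintro _ ⟨i, hi, rfl⟩
    exact Submodule.mem_iSup_of_mem (μ i) <| Submodule.mem_iSup_of_mem hi <|
      Module.End.mem_eigenspace_iff.2 (hv i)
  have hPQ : P ⊔ Q = ⊤ := by
    rw [← Submodule.span_union, ← Set.image_union, ← hspan, ← Set.image_univ]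
    congr 2
    exact Set.union_compl_self {i | μ i = c}
  refine le_antisymm (fun a ha ↦ ?_) hP
  obtain ⟨p, hp, q, hq, rfl⟩ := Submodule.mem_sup.1 (hPQ.ge (Submodule.mem_top : a ∈ ⊤))
  have hq' : q ∈ f.eigenspace c := by simpa using sub_mem ha (hP hp)
  have hq₀ : q = 0 := Submodule.disjoint_def.1 (f.eigenspaces_iSupIndep c) q hq' (hQ hq)
  simpa [hq₀] using hp

section UnitPowers

variable {K B : Type*} [CommRing K] [CommRing B] [Algebra K B]

lemma span_range_zpow_eq_top {u : Bˣ} (hu : Algebra.adjoin K {(u : B), (↑u⁻¹ : B)} = ⊤) :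
    Submodule.span K (Set.range fun k : ℤ ↦ (↑(u ^ k) : B)) = ⊤ := by
  rw [eq_top_iff, ← Algebra.top_toSubmodule, ← hu, Algebra.adjoin_eq_span]
  refine Submodule.span_mono fun b hb ↦ ?_
  obtain ⟨k, l, rfl⟩ := (Submonoid.mem_closure_pair _ _ _).1 hb
  exact ⟨k - l, by simp [zpow_sub]⟩

lemma map_zpow_of_map_eq_smul {u : Bˣ} {ζ : Kˣ} {σ : B →ₐ[K] B} (hσ : σ u = ζ • (u : B)) (k : ℤ) :
    σ ↑(u ^ k) = (↑(ζ ^ k) : K) • (↑(u ^ k) : B) := by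
  have hσ' : Units.map (σ : B →* B) u = Units.map (algebraMap K B : K →* B) ζ * u := by
    ext
    simpa [Algebra.smul_def, Units.smul_def] using hσ
  simpa [mul_zpow, ← map_zpow, Algebra.smul_def] using
    congrArg (fun v : Bˣ ↦ (↑(v ^ k) : B)) hσ'

theorem map_eq_self_iff_mem_adjoin_pow [IsDomain K] [Module.IsTorsionFree K B] {u : Bˣ}
    (hu : Algebra.adjoin K {(u : B), (↑u⁻¹ : B)} = ⊤) {ζ : Kˣ} {n : ℕ} (hζ : IsPrimitiveRoot ζ n)
    {σ : B →ₐ[K] B} (hσ : σ u = ζ • (u : B)) (b : B) :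
    σ b = b ↔ b ∈ Algebra.adjoin K {(u : B) ^ n, (↑u⁻¹ : B) ^ n} := by
  set S := Algebra.adjoin K {(u : B) ^ n, (↑u⁻¹ : B) ^ n}
  constructor
  · intro hb
    have hb' : b ∈ Module.End.eigenspace σ.toLinearMap 1 := by simpa using hb
    rw [eigenspace_eq_span_of_span_eigenvectors_eq_top (map_zpow_of_map_eq_smul hσ)
      (span_range_zpow_eq_top hu)] at hb'
    refine (Submodule.span_le (p := Subalgebra.toSubmodule S)).2 ?_ hb'
    rintro _ ⟨k, hk, rfl⟩
    obtain ⟨m, rfl⟩ := (hζ.zpow_eq_one_iff_dvd k).1 (Units.ext hk)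
    obtain ⟨l, rfl | rfl⟩ := m.eq_nat_or_neg
    · simpa [zpow_mul] using pow_mem (Algebra.subset_adjoin (by simp) : (u : B) ^ n ∈ S) l
    · simpa [zpow_mul] using pow_mem (Algebra.subset_adjoin (by simp) : (↑u⁻¹ : B) ^ n ∈ S) l
  · have hζn : ζ ^ n = 1 := hζ.pow_eq_one
    have hS : S ≤ AlgHom.equalizer σ (AlgHom.id K B) := by
      refine Algebra.adjoin_le ?_
      rintro _ (rfl | rfl)
      · simpa [hζn] using map_zpow_of_map_eq_smul hσ n
      · simpa [hζn] using map_zpow_of_map_eq_smul hσ (-n)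
    exact fun hb ↦ hS hb

end UnitPowers

lemma adjoin_pair_sub_smul_add_smul {K B : Type*} [Field K] [NeZero (2 : K)] [CommRing B]
    [Algebra K B] {c : K} (hc : c ≠ 0) (x y : B) :
    Algebra.adjoin K {x - c • y, x + c • y} = Algebra.adjoin K {x, y} := by
  apply le_antisymm <;> refine Algebra.adjoin_le ?_
  · have hx : x ∈ Algebra.adjoin K {x, y} := Algebra.subset_adjoin (by simp)
    have hy : y ∈ Algebra.adjoin K {x, y} := Algebra.subset_adjoin (by simp)
    rintro _ (rfl | rfl)
    exacts [sub_mem hx (Subalgebra.smul_mem _ hy c), add_mem hx (Subalgebra.smul_mem _ hy c)]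
  · set S := Algebra.adjoin K {x - c • y, x + c • y}
    have hsub : x - c • y ∈ S := Algebra.subset_adjoin (by simp)
    have hadd : x + c • y ∈ S := Algebra.subset_adjoin (by simp)
    have h2 : (2 : K) ≠ 0 := two_ne_zero
    have hx : x = (2 : K)⁻¹ • ((x + c • y) + (x - c • y)) := by
      match_scalars <;> field_simp <;> ring
    have hy : y = (2 * c)⁻¹ • ((x + c • y) - (x - c • y)) := by
      match_scalars <;> field_simp <;> ring
    rintro _ (rfl | rfl)
    · exact hx ▸ Subalgebra.smul_mem S (add_mem hadd hsub) _
    · exact hy ▸ Subalgebra.smul_mem S (sub_mem hadd hsub) _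

section BaseChange

variable {K L : Type*} [CommRing K]

lemma one_tmul_mem_baseChange_iff [Ring L] [Algebra K L] [Module.FaithfullyFlat K L]
    {M : Type*} [AddCommGroup M] [Module K M] {p : Submodule K M} {m : M} :
    (1 : L) ⊗ₜ[K] m ∈ p.baseChange L ↔ m ∈ p := by
  rw [← Submodule.span_singleton_le_iff_mem m p, ← Submodule.baseChange_le_iff (A := L),
    Submodule.baseChange_span, Set.image_singleton, Submodule.span_singleton_le_iff_mem,
    TensorProduct.mk_apply]

lemma one_tmul_mem_adjoin_image_iff [CommRing L] [Algebra K L] [Module.FaithfullyFlat K L]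
    {R : Type*} [Ring R] [Algebra K R] {X : Set R} {a : R} :
    (1 : L) ⊗ₜ[K] a ∈ Algebra.adjoin L (((1 : L) ⊗ₜ[K] ·) '' X) ↔ a ∈ Algebra.adjoin K X := by
  have hclosure : (Submonoid.closure (((1 : L) ⊗ₜ[K] ·) '' X) : Set (L ⊗[K] R)) =
      TensorProduct.mk K L R 1 '' Submonoid.closure X :=
    congrArg SetLike.coe (MonoidHom.map_mclosure
      (Algebra.TensorProduct.includeRight (R := K) (A := L) (B := R) : R →* L ⊗[K] R) X).symm
  rw [← Subalgebra.mem_toSubmodule, ← Subalgebra.mem_toSubmodule, Algebra.adjoin_eq_span,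
    Algebra.adjoin_eq_span, hclosure, ← Submodule.baseChange_span, one_tmul_mem_baseChange_iff]

end BaseChange

lemma sum_range_eq_sum_even_add_sum_odd {M : Type*} [AddCommMonoid M] (f : ℕ → M) (n : ℕ) :
    ∑ k ∈ Finset.range n, f k =
      ∑ j ∈ Finset.range ((n + 1) / 2), f (2 * j) + ∑ j ∈ Finset.range (n / 2), f (2 * j + 1) := by
  induction n with
  | zero => simp
  | succ n ih =>
    rw [Finset.sum_range_succ, ih]
    obtain ⟨m, rfl | rfl⟩ := n.even_or_odd'
    · rw [show (2 * m + 1) / 2 = m by omega, show (2 * m + 1 + 1) / 2 = m + 1 by omega,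
        show 2 * m / 2 = m by omega, Finset.sum_range_succ, add_right_comm]
    · rw [show (2 * m + 1 + 1 + 1) / 2 = m + 1 by omega, show (2 * m + 1 + 1) / 2 = m + 1 by omega,
        show (2 * m + 1) / 2 = m by omega, Finset.sum_range_succ (fun j ↦ f (2 * j + 1)), add_assoc]

lemma map_aeval_pair {K A B : Type*} [CommSemiring K] [CommSemiring A] [CommSemiring B]
    [Algebra K A] [Algebra K B] (f : A →ₐ[K] B) (s t : A) (p : MvPolynomial (Fin 2) K) :
    f (aeval ![s, t] p) = aeval ![f s, f t] p := by
  rw [comp_aeval_apply]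
  congr 2
  ext i
  fin_cases i <;> rfl

lemma aeval_XnPoly_add_mul_aeval_YnPoly {B : Type*} [CommRing B] [Algebra ℝ B] {c : B}
    (hc : c ^ 2 = -1) (s t : B) (n : ℕ) :
    aeval ![s, t] (XnPoly n) + c * aeval ![s, t] (YnPoly n) = (s + c * t) ^ n := by
  rw [add_comm s, add_pow, sum_range_eq_sum_even_add_sum_odd, show (n + 1 + 1) / 2 = n / 2 + 1 by
    omega, XnPoly, YnPoly, map_sum, map_sum, Finset.mul_sum]
  congr 1 <;> refine Finset.sum_congr rfl fun j _ ↦ ?_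
  · simp only [map_natCast, map_mul, map_pow, map_neg, map_one, aeval_X,
      Matrix.cons_val_one, Matrix.cons_val_fin_one, Matrix.cons_val_zero, mul_pow, pow_mul c, hc]
    ring
  · have hc' : c ^ (2 * j + 1) = (-1) ^ j * c := by rw [pow_succ, pow_mul, hc]
    simp only [map_natCast, map_mul, map_pow, map_neg, map_one, aeval_X,
      Matrix.cons_val_one, Matrix.cons_val_fin_one, Matrix.cons_val_zero, mul_pow, hc', Nat.sub_sub]
    ring

theorem map_eq_self_iff_mem_adjoin_of_rotation {B : Type*} [CommRing B] [Algebra ℂ B] [Algebra ℝ B]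
    {s t : B} (hst : s ^ 2 + t ^ 2 = 1) (hgen : Algebra.adjoin ℂ {s, t} = ⊤) {ζ : ℂˣ} {n : ℕ}
    (hζ : IsPrimitiveRoot ζ n) {σ : B →ₐ[ℂ] B}
    (hσ : σ (s - Complex.I • t) = ζ • (s - Complex.I • t)) (b : B) :
    σ b = b ↔ b ∈ Algebra.adjoin ℂ {aeval ![s, t] (XnPoly n), aeval ![s, t] (YnPoly n)} := by
  set i : B := algebraMap ℂ B Complex.I
  have hi : i ^ 2 = -1 := by simp [i, ← map_pow]
  have hsmul (x : B) : Complex.I • x = i * x := Algebra.smul_def _ x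
  have hinv : (s - Complex.I • t) * (s + Complex.I • t) = 1 := by
    rw [hsmul]
    linear_combination hst - t ^ 2 * hi
  let u : Bˣ := ⟨s - Complex.I • t, s + Complex.I • t, hinv, by rw [mul_comm, hinv]⟩
  have hu : Algebra.adjoin ℂ {(u : B), (↑u⁻¹ : B)} = ⊤ :=
    (adjoin_pair_sub_smul_add_smul Complex.I_ne_zero s t).trans hgen
  have hpow : (u : B) ^ n = aeval ![s, t] (XnPoly n) - Complex.I • aeval ![s, t] (YnPoly n) := by
    simpa [u, hsmul, sub_eq_add_neg] using
      (aeval_XnPoly_add_mul_aeval_YnPoly (c := -i) (by simpa using hi) s t n).symm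
  have hinvpow :
      (↑u⁻¹ : B) ^ n = aeval ![s, t] (XnPoly n) + Complex.I • aeval ![s, t] (YnPoly n) := by
    simpa [u, hsmul] using (aeval_XnPoly_add_mul_aeval_YnPoly hi s t n).symm
  rw [map_eq_self_iff_mem_adjoin_pow hu hζ hσ, hpow, hinvpow,
    adjoin_pair_sub_smul_add_smul Complex.I_ne_zero]

lemma map_sub_I_smul_of_rotation {M : Type*} [AddCommGroup M] [Module ℂ M] {f : M →ₗ[ℂ] M}
    {θ : ℂ} {s t : M} (hs : f s = Complex.cos θ • s + Complex.sin θ • t)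
    (ht : f t = -Complex.sin θ • s + Complex.cos θ • t) :
    f (s - Complex.I • t) = Complex.exp (θ * Complex.I) • (s - Complex.I • t) := by
  rw [map_sub, map_smul, hs, ht, Complex.exp_mul_I]
  match_scalars
  · ring
  · linear_combination Complex.sin θ * Complex.I_sq

/-- For `n = 0` the rotation has infinite order, and its only invariants are the constants. -/
theorem circle_invariants_eq_adjoin_general {R : Type*} [CommRing R] [Algebra ℝ R] {s t : R}
    (hst : s ^ 2 + t ^ 2 = 1) (hgen : Algebra.adjoin ℝ {s, t} = ⊤) {θ : ℝ} {n : ℕ}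
    (hθ : IsPrimitiveRoot (Complex.exp (θ * Complex.I)) n) (σ : R →ₐ[ℝ] R)
    (hσs : σ s = Real.cos θ • s + Real.sin θ • t)
    (hσt : σ t = -Real.sin θ • s + Real.cos θ • t) (a : R) :
    σ a = a ↔ a ∈ Algebra.adjoin ℝ {aeval ![s, t] (XnPoly n), aeval ![s, t] (YnPoly n)} := by
  have hst' : ((1 : ℂ) ⊗ₜ[ℝ] s) ^ 2 + ((1 : ℂ) ⊗ₜ[ℝ] t) ^ 2 = 1 := by
    simp [Algebra.TensorProduct.tmul_pow, ← TensorProduct.tmul_add, hst,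
      Algebra.TensorProduct.one_def]
  have hgen' : Algebra.adjoin ℂ {(1 : ℂ) ⊗ₜ[ℝ] s, (1 : ℂ) ⊗ₜ[ℝ] t} = ⊤ := by
    simpa [Set.image_pair] using Algebra.TensorProduct.adjoin_one_tmul_image_eq_top (A := ℂ) _ hgen
  have hζ : IsPrimitiveRoot (Units.mk0 _ (Complex.exp_ne_zero (θ * Complex.I))) n :=
    IsPrimitiveRoot.coe_units_iff.1 hθ
  set σ' : ℂ ⊗[ℝ] R →ₐ[ℂ] ℂ ⊗[ℝ] R := Algebra.TensorProduct.map (AlgHom.id ℂ ℂ) σ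
  have hsmul (c : ℝ) (x : R) : (1 : ℂ) ⊗ₜ[ℝ] (c • x) = (c : ℂ) • (1 : ℂ) ⊗ₜ[ℝ] x := by
    simp [TensorProduct.smul_tmul']
  have hσ' := map_sub_I_smul_of_rotation (f := σ'.toLinearMap) (θ := θ) (s := (1 : ℂ) ⊗ₜ[ℝ] s)
    (t := (1 : ℂ) ⊗ₜ[ℝ] t)
    (by simp [σ', hσs, TensorProduct.tmul_add, hsmul])
    (by simp [σ', hσt, TensorProduct.tmul_add, TensorProduct.tmul_neg, hsmul])
  have haeval (p : MvPolynomial (Fin 2) ℝ) :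
      aeval ![(1 : ℂ) ⊗ₜ[ℝ] s, (1 : ℂ) ⊗ₜ[ℝ] t] p = (1 : ℂ) ⊗ₜ[ℝ] aeval ![s, t] p := by
    simpa only [Algebra.TensorProduct.includeRight_apply] using
      (map_aeval_pair (Algebra.TensorProduct.includeRight : R →ₐ[ℝ] ℂ ⊗[ℝ] R) s t p).symm
  have hfixed : σ' ((1 : ℂ) ⊗ₜ[ℝ] a) = (1 : ℂ) ⊗ₜ[ℝ] a ↔ σ a = a := by
    simpa [σ'] using
      (Module.FaithfullyFlat.tensorProduct_mk_injective (A := ℝ) (B := ℂ) R).eq_iff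
  rw [← hfixed, map_eq_self_iff_mem_adjoin_of_rotation hst' hgen' hζ hσ', haeval, haeval,
    ← one_tmul_mem_adjoin_image_iff (K := ℝ) (L := ℂ), Set.image_pair]

section Quotient

variable {K : Type*} [CommRing K]

lemma aeval_mk_X (I : Ideal (MvPolynomial (Fin 2) K)) (p : MvPolynomial (Fin 2) K) :
    aeval ![Ideal.Quotient.mk I (X 0), Ideal.Quotient.mk I (X 1)] p = Ideal.Quotient.mk I p := by
  have hX : ![X 0, X 1] = (X : Fin 2 → MvPolynomial (Fin 2) K) := by
    funext i
    fin_cases i <;> rfl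
  have h := map_aeval_pair (Ideal.Quotient.mkₐ K I) (X 0) (X 1) p
  rw [hX, aeval_X_left_apply] at h
  exact h.symm

lemma adjoin_mk_X_eq_top (I : Ideal (MvPolynomial (Fin 2) K)) :
    Algebra.adjoin K {Ideal.Quotient.mk I (X 0), Ideal.Quotient.mk I (X 1)} = ⊤ := by
  rw [← Matrix.range_cons_cons_empty _ _ ![], Algebra.adjoin_range_eq_range_aeval,
    AlgHom.range_eq_top]
  intro a
  obtain ⟨p, rfl⟩ := Ideal.Quotient.mk_surjective a
  exact ⟨p, aeval_mk_X I p⟩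

lemma mk_C_mul {ι : Type*} (I : Ideal (MvPolynomial ι K)) (r : K) (p : MvPolynomial ι K) :
    Ideal.Quotient.mk I (C r * p) = r • Ideal.Quotient.mk I p := by
  rw [← smul_eq_C_mul]
  rfl

end Quotient

lemma mk_X_sq_add_mk_X_sq :
    Ideal.Quotient.mk circleIdeal (X 0) ^ 2 + Ideal.Quotient.mk circleIdeal (X 1) ^ 2 = 1 :=
  Ideal.Quotient.mk_eq_mk_iff_sub_mem (X 0 ^ 2 + X 1 ^ 2) 1 |>.2 (Ideal.subset_span rfl)

lemma isPrimitiveRoot_exp_two_pi_div_mul_I {n : ℕ} (hn : n ≠ 0) :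
    IsPrimitiveRoot (Complex.exp ((2 * π / n : ℝ) * Complex.I)) n := by
  convert Complex.isPrimitiveRoot_exp n hn using 2
  push_cast
  ring

/-- Let `σ` be the ℝ-algebra endomorphism of `A = ℝ[s,t]/(s² + t² − 1)` induced by the
rotation `ρ_{2π/n}`, i.e. `σ(s) = s cos(2π/n) + t sin(2π/n)` and
`σ(t) = −s sin(2π/n) + t cos(2π/n)`.  Then the `σ`-invariant subalgebra of `A`
equals the ℝ-subalgebra generated by the images of `x_n` and `y_n`. -/
theorem circle_invariants_eq_adjoin (n : ℕ) (hn : 1 ≤ n)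
    (σ : CircleRing →ₐ[ℝ] CircleRing)
    (hσs : σ (Ideal.Quotient.mk circleIdeal (X 0)) =
      Ideal.Quotient.mk circleIdeal
        (C (Real.cos (2 * π / n)) * X 0 + C (Real.sin (2 * π / n)) * X 1))
    (hσt : σ (Ideal.Quotient.mk circleIdeal (X 1)) =
      Ideal.Quotient.mk circleIdeal
        (- C (Real.sin (2 * π / n)) * X 0 + C (Real.cos (2 * π / n)) * X 1))
    (a : CircleRing) :
    σ a = a ↔
      a ∈ Algebra.adjoin ℝ
        ({Ideal.Quotient.mk circleIdeal (XnPoly n),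
          Ideal.Quotient.mk circleIdeal (YnPoly n)} : Set CircleRing) := by
  simpa only [aeval_mk_X] using circle_invariants_eq_adjoin_general mk_X_sq_add_mk_X_sq
    (adjoin_mk_X_eq_top _) (isPrimitiveRoot_exp_two_pi_div_mul_I (by omega)) σ
    (by simpa only [map_add, mk_C_mul] using hσs)
    (by simpa only [map_add, ← C_neg, mk_C_mul] using hσt) a
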